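/- Max-information of classical-quantum states: let I be a finite set, p_i > 0 for i ∈ I, and ρ^i_AB sub-normalized states on H_A ⊗ H_B such that ρ_ABI = ∑_{i∈I} p_i ρ^i_AB ⊗ |i⟩⟨i| is a sub-normalized state on H_A ⊗ H_B ⊗ C^{|I|} (with {|i⟩} the standard basis of C^{|I|}). Then I_max(AI:B)_ρ ≥ max_{i∈I} I_max(A:B)_{ρ^i}, where on the left-hand side the first system is H_A ⊗ C^{|I|} and the second system is H_B. -/

import Mathlib

open scoped Kronecker ComplexOrder
open Matrix

noncomputable section

/-- Partial trace over the right tensor factor. -/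
def ptraceRight {α β : Type*} [Fintype β] (M : Matrix (α × β) (α × β) ℂ) : Matrix α α ℂ :=
  Matrix.of fun i j => ∑ b, M (i, b) (j, b)

/-- The max-information `I_max(A:B)_ρ = inf_{σ_B state} D_max(ρ_AB ‖ ρ_A ⊗ σ_B)`, written
as a single base-2 logarithm of a joint infimum over `λ ≥ 0` and states `σ_B` with
`ρ_AB ≤ λ (ρ_A ⊗ σ_B)` in the Loewner order. -/
def Imax {α β : Type*} [Fintype α] [Fintype β] [DecidableEq α] [DecidableEq β]
    (ρ : Matrix (α × β) (α × β) ℂ) : ℝ :=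
  Real.logb 2 (sInf {lam : ℝ | 0 ≤ lam ∧ ∃ σ : Matrix β β ℂ, σ.PosSemidef ∧ σ.trace = 1 ∧
    (lam • (ptraceRight ρ ⊗ₖ σ) - ρ).PosSemidef})

/-!
Restricting the first system can only enlarge the set of feasible `λ` in `I_max`, and rescaling the
operator does not change that set; `ρ^i` is obtained from `ρ_{ABI}` by restricting to the block
`|i⟩⟨i|` and rescaling. To pass from feasible sets to their infima one needs a feasible `λ` for
`ρ_{ABI}`. It comes from `ρ_AB ≤ |B| (ρ_A ⊗ 1)`: after resolving the identity of `B` into rank-one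
projections, Cauchy–Schwarz bounds `ρ_AB` by `|B|` times its pinching, each block of which is at
most `ρ_A`.
-/

section LoewnerOrder

open scoped MatrixOrder

lemma sum_mul_mul_conjTranspose_sum_le {ι m n 𝕜 : Type*} [RCLike 𝕜] [Finite m] [Fintype n]
    {M : Matrix n n 𝕜} (hM : M.PosSemidef) (s : Finset ι) (K : ι → Matrix m n 𝕜) :
    (∑ i ∈ s, K i) * M * (∑ i ∈ s, K i)ᴴ ≤ s.card • ∑ i ∈ s, K i * M * (K i)ᴴ := by
  have hpos : (∑ i ∈ s, ∑ j ∈ s, (K i - K j) * M * (K i - K j)ᴴ).PosSemidef :=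
    posSemidef_sum _ fun i _ ↦ posSemidef_sum _ fun j _ ↦ hM.mul_mul_conjTranspose_same _
  have hexpand : ∑ i ∈ s, ∑ j ∈ s, (K i - K j) * M * (K i - K j)ᴴ =
      (2 : ℝ) • (s.card • ∑ i ∈ s, K i * M * (K i)ᴴ -
        (∑ i ∈ s, K i) * M * (∑ i ∈ s, K i)ᴴ) := by
    simp only [conjTranspose_sub, Matrix.sub_mul, Matrix.mul_sub, Finset.sum_sub_distrib,
      ← Matrix.mul_sum, ← Matrix.sum_mul, ← conjTranspose_sum, Finset.sum_const,
      ← Finset.smul_sum]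
    module
  rw [hexpand] at hpos
  simpa [le_iff, smul_smul] using hpos.smul (inv_nonneg.mpr (zero_le_two (α := ℝ)))

lemma kronecker_le_kronecker_of_le_left {m n 𝕜 : Type*} [RCLike 𝕜] [Finite m] [Finite n]
    {A A' : Matrix m m 𝕜} {B : Matrix n n 𝕜} (hA : A ≤ A') (hB : B.PosSemidef) :
    A ⊗ₖ B ≤ A' ⊗ₖ B := by
  rw [le_iff]
  convert (le_iff.mp hA).kronecker hB using 1
  ext
  simp [sub_mul]

variable {α β : Type*}

lemma ptraceRight_eq_sum_submatrix [Fintype β] (M : Matrix (α × β) (α × β) ℂ) :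
    ptraceRight M = ∑ b, M.submatrix (·, b) (·, b) := by
  ext a a'
  simp [ptraceRight, Matrix.sum_apply]

lemma submatrix_le_ptraceRight [Fintype β] {M : Matrix (α × β) (α × β) ℂ}
    (hM : M.PosSemidef) (b : β) : M.submatrix (·, b) (·, b) ≤ ptraceRight M := by
  rw [ptraceRight_eq_sum_submatrix]
  exact Finset.single_le_sum (f := fun b ↦ M.submatrix (·, b) (·, b))
    (fun b _ ↦ (hM.submatrix (·, b)).nonneg) (Finset.mem_univ b)

/-- The pinching `∑ b, (1 ⊗ |b⟩⟨b|) M (1 ⊗ |b⟩⟨b|)` of a bipartite operator in the standard basis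
of the right tensor factor, written through its diagonal blocks. -/
def pinchRight [Fintype β] [DecidableEq β] (M : Matrix (α × β) (α × β) ℂ) :
    Matrix (α × β) (α × β) ℂ :=
  ∑ b, M.submatrix (·, b) (·, b) ⊗ₖ single b b (1 : ℂ)

variable [Finite α] [Fintype β] [DecidableEq β] {M : Matrix (α × β) (α × β) ℂ}

lemma pinchRight_le_ptraceRight_kronecker_one (hM : M.PosSemidef) :
    pinchRight M ≤ ptraceRight M ⊗ₖ (1 : Matrix β β ℂ) := by
  have hblock (b : β) : M.submatrix (·, b) (·, b) ⊗ₖ single b b (1 : ℂ) ≤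
      ptraceRight M ⊗ₖ single b b (1 : ℂ) := by
    have hsingle : (single b b (1 : ℂ)).PosSemidef := by
      rw [← diagonal_single]
      exact .diagonal (Pi.single_nonneg.mpr zero_le_one)
    exact kronecker_le_kronecker_of_le_left (submatrix_le_ptraceRight hM b) hsingle
  calc pinchRight M ≤ ∑ b, ptraceRight M ⊗ₖ single b b (1 : ℂ) :=
        Finset.sum_le_sum fun b _ ↦ hblock b
    _ = ptraceRight M ⊗ₖ (1 : Matrix β β ℂ) := by
        rw [← sum_single_one]
        exact (map_sum (kroneckerBilinear (R := ℂ) (ptraceRight M)) _ _).symm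

lemma le_card_smul_pinchRight (hM : M.PosSemidef) : M ≤ Fintype.card β • pinchRight M := by
  classical
  cases nonempty_fintype α
  let P (b : β) : Matrix (α × β) (α × β) ℂ := diagonal fun q ↦ if q.2 = b then 1 else 0
  have hone : ∑ b, P b = 1 := by
    ext q r
    simp [P, Matrix.sum_apply, diagonal_apply, one_apply]
  have hconj (b : β) : P b * M * (P b)ᴴ = M.submatrix (·, b) (·, b) ⊗ₖ single b b (1 : ℂ) := by
    ext ⟨a, x⟩ ⟨a', x'⟩
    by_cases hx : x = b <;> by_cases hx' : x' = b <;>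
      simp [P, hx, hx', diagonal_conjTranspose, eq_comm (a := b)]
  simpa [hone, hconj, pinchRight] using sum_mul_mul_conjTranspose_sum_le hM Finset.univ P

theorem le_card_smul_ptraceRight_kronecker_one (hM : M.PosSemidef) :
    M ≤ Fintype.card β • (ptraceRight M ⊗ₖ (1 : Matrix β β ℂ)) :=
  (le_card_smul_pinchRight hM).trans
    (nsmul_le_nsmul_right (pinchRight_le_ptraceRight_kronecker_one hM) _)

end LoewnerOrder

lemma trace_ptraceRight {α β : Type*} [Fintype α] [Fintype β] (M : Matrix (α × β) (α × β) ℂ) :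
    (ptraceRight M).trace = M.trace := by
  simp [ptraceRight, Matrix.trace, Fintype.sum_prod_type]

lemma ptraceRight_smul {α β : Type*} [Fintype β] (c : ℝ) (M : Matrix (α × β) (α × β) ℂ) :
    ptraceRight (c • M) = c • ptraceRight M := by
  ext a a'
  simp [ptraceRight, Finset.mul_sum]

section MaxInformation

variable {α α' β : Type*} [Fintype β]

/-- The set of `λ ≥ 0` with `ρ_AB ≤ λ (ρ_A ⊗ σ_B)` for some state `σ_B`, of which `Imax` is the
logarithm of the infimum. -/
def imaxFeasible (ρ : Matrix (α × β) (α × β) ℂ) : Set ℝ :=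
  {lam : ℝ | 0 ≤ lam ∧ ∃ σ : Matrix β β ℂ, σ.PosSemidef ∧ σ.trace = 1 ∧
    (lam • (ptraceRight ρ ⊗ₖ σ) - ρ).PosSemidef}

lemma imaxFeasible_subset_submatrix (ρ : Matrix (α × β) (α × β) ℂ) (f : α' → α) :
    imaxFeasible ρ ⊆ imaxFeasible (ρ.submatrix (Prod.map f id) (Prod.map f id)) := by
  rintro l ⟨hl, σ, hσ, hσ1, h⟩
  exact ⟨hl, σ, hσ, hσ1, h.submatrix (Prod.map f id)⟩

lemma imaxFeasible_subset_smul (ρ : Matrix (α × β) (α × β) ℂ) {c : ℝ} (hc : 0 ≤ c) :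
    imaxFeasible ρ ⊆ imaxFeasible (c • ρ) := by
  rintro l ⟨hl, σ, hσ, hσ1, h⟩
  refine ⟨hl, σ, hσ, hσ1, ?_⟩
  rw [ptraceRight_smul, smul_kronecker, smul_comm, ← smul_sub]
  exact h.smul hc

variable {ρ : Matrix (α × β) (α × β) ℂ}

lemma bddBelow_imaxFeasible : BddBelow (imaxFeasible ρ) :=
  ⟨0, fun _ hl ↦ hl.1⟩

lemma nonempty_of_imaxFeasible_nonempty (hne : (imaxFeasible ρ).Nonempty) : Nonempty β := by
  obtain ⟨_, _, σ, _, hσ1, _⟩ := hne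
  by_contra hβ
  rw [not_nonempty_iff] at hβ
  simp [Matrix.trace] at hσ1

lemma isLeast_imaxFeasible_zero
    (hne : (imaxFeasible (0 : Matrix (α × β) (α × β) ℂ)).Nonempty) :
    IsLeast (imaxFeasible (0 : Matrix (α × β) (α × β) ℂ)) 0 := by
  obtain ⟨_, _, σ, hσ, hσ1, _⟩ := hne
  exact ⟨⟨le_rfl, σ, hσ, hσ1, by simpa using PosSemidef.zero⟩, fun _ hl ↦ hl.1⟩

lemma one_le_of_mem_imaxFeasible [Finite α] (hρ : ρ.PosSemidef) (hρ0 : ρ ≠ 0) {l : ℝ}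
    (hl : l ∈ imaxFeasible ρ) : 1 ≤ l := by
  cases nonempty_fintype α
  obtain ⟨_, σ, _, hσ1, h⟩ := hl
  have htrace : ρ.trace ≤ l * ρ.trace := by
    simpa [trace_sub, trace_smul, trace_kronecker, hσ1, trace_ptraceRight] using h.trace_nonneg
  have hpos : 0 < ρ.trace := hρ.trace_nonneg.lt_of_ne' (mt hρ.trace_eq_zero_iff.mp hρ0)
  exact_mod_cast (le_mul_iff_one_le_left hpos).mp htrace

lemma imaxFeasible_nonempty [Finite α] [Nonempty β] (hρ : ρ.PosSemidef) :
    (imaxFeasible ρ).Nonempty := by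
  classical
  have hcard : (Fintype.card β : ℝ) ≠ 0 := by positivity
  refine ⟨Fintype.card β * Fintype.card β, by positivity, (Fintype.card β : ℝ)⁻¹ • 1,
    PosSemidef.one.smul (by positivity), by simp [trace_smul], ?_⟩
  have hle := le_card_smul_ptraceRight_kronecker_one hρ
  rw [le_iff, ← Nat.cast_smul_eq_nsmul ℝ] at hle
  rwa [kronecker_smul, smul_smul, mul_assoc, mul_inv_cancel₀ hcard, mul_one]

variable [Fintype α] [Fintype α'] [DecidableEq α] [DecidableEq α'] [DecidableEq β]

lemma imax_eq_logb_sInf_imaxFeasible : Imax ρ = Real.logb 2 (sInf (imaxFeasible ρ)) :=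
  rfl

lemma imax_nonneg (hρ : ρ.PosSemidef) : 0 ≤ Imax ρ := by
  rw [imax_eq_logb_sInf_imaxFeasible]
  obtain hempty | hne := (imaxFeasible ρ).eq_empty_or_nonempty
  · simp [hempty]
  obtain rfl | hρ0 := eq_or_ne ρ 0
  · simp [(isLeast_imaxFeasible_zero hne).csInf_eq]
  · exact Real.logb_nonneg one_lt_two
      (le_csInf hne fun _ hl ↦ one_le_of_mem_imaxFeasible hρ hρ0 hl)

theorem imax_le_imax_of_imaxFeasible_subset {ρ' : Matrix (α' × β) (α' × β) ℂ}
    (hρ' : ρ'.PosSemidef) (hsub : imaxFeasible ρ' ⊆ imaxFeasible ρ) : Imax ρ ≤ Imax ρ' := by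
  have hnonneg : 0 ≤ sInf (imaxFeasible ρ) := Real.sInf_nonneg fun _ hl ↦ hl.1
  obtain hzero | hpos := hnonneg.eq_or_lt
  · -- Junk value `logb 2 0 = 0`: the paper's value is `-∞`, or `+∞` if nothing is feasible.
    have : Imax ρ = 0 := by simp [imax_eq_logb_sInf_imaxFeasible, ← hzero]
    exact this.trans_le (imax_nonneg hρ')
  · have hne : (imaxFeasible ρ).Nonempty := by
      by_contra! hempty
      simp [hempty] at hpos
    have : Nonempty β := nonempty_of_imaxFeasible_nonempty hne
    exact Real.logb_le_logb_of_le one_lt_two hpos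
      (csInf_le_csInf bddBelow_imaxFeasible (imaxFeasible_nonempty hρ') hsub)

theorem imax_submatrix_le (hρ : ρ.PosSemidef) (f : α' → α) :
    Imax (ρ.submatrix (Prod.map f id) (Prod.map f id)) ≤ Imax ρ :=
  imax_le_imax_of_imaxFeasible_subset hρ (imaxFeasible_subset_submatrix ρ f)

lemma imax_smul_le (hρ : ρ.PosSemidef) {c : ℝ} (hc : 0 ≤ c) : Imax (c • ρ) ≤ Imax ρ :=
  imax_le_imax_of_imaxFeasible_subset hρ (imaxFeasible_subset_smul ρ hc)

end MaxInformation

theorem imax_cq_states_general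
    {A B I : Type*} [Fintype A] [Fintype B] [Fintype I] [DecidableEq A] [DecidableEq B]
    [DecidableEq I] {p : ℝ} (hp : 0 < p) {ρ : Matrix (A × B) (A × B) ℂ}
    {τ : Matrix ((A × I) × B) ((A × I) × B) ℂ} (hτ : τ.PosSemidef) (i : I)
    (hblock : ∀ (a : A) (x : B) (a' : A) (x' : B),
      τ ((a, i), x) ((a', i), x') = (p : ℂ) * ρ (a, x) (a', x')) :
    Imax ρ ≤ Imax τ := by
  let σ : Matrix (A × B) (A × B) ℂ := τ.submatrix (Prod.map (·, i) id) (Prod.map (·, i) id)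
  have hρ : ρ = p⁻¹ • σ := by
    ext ⟨a, x⟩ ⟨a', x'⟩
    simp [σ, hblock, hp.ne']
  calc Imax ρ = Imax (p⁻¹ • σ) := congrArg Imax hρ
    _ ≤ Imax σ := imax_smul_le (hτ.submatrix _) (inv_nonneg.mpr hp.le)
    _ ≤ Imax τ := imax_submatrix_le hτ (·, i)

/-- **Max-information of classical-quantum states**: for
`ρ_{ABI} = Σ_i p_i ρ^i_{AB} ⊗ |i⟩⟨i|` (written on `(A ⊗ I) ⊗ B` via its entries),
`I_max(AI:B)_ρ ≥ max_i I_max(A:B)_{ρ^i}`. -/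
theorem imax_cq_states
    {A B : Type*} [Fintype A] [Fintype B] [DecidableEq A] [DecidableEq B]
    (L : ℕ) (p : Fin L → ℝ) (hp : ∀ i, 0 < p i)
    (ρi : Fin L → Matrix (A × B) (A × B) ℂ)
    (hρi : ∀ i, (ρi i).PosSemidef ∧ (ρi i).trace.re ≤ 1)
    (τ : Matrix ((A × Fin L) × B) ((A × Fin L) × B) ℂ)
    (hτ : ∀ (a : A) (i : Fin L) (x : B) (a' : A) (i' : Fin L) (x' : B),
      τ ((a, i), x) ((a', i'), x') =
        if i = i' then (p i : ℂ) * ρi i (a, x) (a', x') else 0)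
    (hτsub : τ.PosSemidef ∧ τ.trace.re ≤ 1) :
    ∀ i, Imax (ρi i) ≤ Imax τ := fun i ↦
  imax_cq_states_general (hp i) hτsub.1 i (by simp [hτ])
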